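/- Composition of liftings: if C witnesses the R-lifting between (a : I → A, p) and (b : J → B, q), and D witnesses the S-lifting between (b, q) and (c : K → C, r), then the matrix E i k := ∑_{j with q j > 0} C i j * D j k / q j is a coupling between p and r witnessing the lifting of the relational composition (fun x z => ∃ y, R x y ∧ S y z) between (a, p) and (c, r). -/

import Mathlib

/-!
Composing two liftings is gluing along the middle marginal: conditionally on `j`, the choices of
`i` and `k` are made independently, which gives the weight `C i j * D j k / q j`. Summing over `k`
(resp. `i`) replaces `D j k` (resp. `C i j`) by `q j`, which cancels the denominator. The indices
with `q j = 0` may be left out because the `j`-th column of `C` and the `j`-th row of `D`, being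
nonnegative with sum `q j`, vanish there. A positive entry of the composite has a positive summand
at some `j`, and `b j` is then the intermediate label.
-/

open scoped NNReal

open Classical in
theorem lifting_comp {I J K : Type*} [Fintype I] [Fintype J] [Fintype K]
    {A B C' : Type*} (R : A → B → Prop) (S : B → C' → Prop)
    (a : I → A) (b : J → B) (c : K → C')
    (p : I → ℝ≥0) (q : J → ℝ≥0) (r : K → ℝ≥0)
    (C : I → J → ℝ≥0) (D : J → K → ℝ≥0)
    (hCrow : ∀ i, ∑ j, C i j = p i) (hCcol : ∀ j, ∑ i, C i j = q j)
    (hCrel : ∀ i j, 0 < C i j → R (a i) (b j))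
    (hDrow : ∀ j, ∑ k, D j k = q j) (hDcol : ∀ k, ∑ j, D j k = r k)
    (hDrel : ∀ j k, 0 < D j k → S (b j) (c k)) :
    (∀ i, ∑ k, (∑ j ∈ Finset.univ.filter (fun j => 0 < q j), C i j * D j k / q j) = p i) ∧
    (∀ k, ∑ i, (∑ j ∈ Finset.univ.filter (fun j => 0 < q j), C i j * D j k / q j) = r k) ∧
    (∀ i k, 0 < (∑ j ∈ Finset.univ.filter (fun j => 0 < q j), C i j * D j k / q j) →
      ∃ y, R (a i) y ∧ S y (c k)) := by 
  have hC0 : ∀ i j, C i j ≠ 0 → 0 < q j := fun i j h => by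
    rw [← hCcol j]
    exact (pos_iff_ne_zero.2 h).trans_le
      (Finset.single_le_sum (f := fun i => C i j) (fun _ _ => zero_le) (Finset.mem_univ i))
  have hD0 : ∀ j k, D j k ≠ 0 → 0 < q j := fun j k h => by
    rw [← hDrow j]
    exact (pos_iff_ne_zero.2 h).trans_le
      (Finset.single_le_sum (f := fun k => D j k) (fun _ _ => zero_le) (Finset.mem_univ k))
  refine ⟨fun i => ?_, fun k => ?_, fun i k h => ?_⟩
  · rw [Finset.sum_comm, ← hCrow i, ← Finset.sum_filter_of_ne (fun j _ => hC0 i j)]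
    refine Finset.sum_congr rfl fun j hj => ?_
    rw [← Finset.sum_div, ← Finset.mul_sum, hDrow,
      mul_div_cancel_right₀ _ (Finset.mem_filter.1 hj).2.ne']
  · rw [Finset.sum_comm, ← hDcol k, ← Finset.sum_filter_of_ne (fun j _ => hD0 j k)]
    refine Finset.sum_congr rfl fun j hj => ?_
    rw [← Finset.sum_div, ← Finset.sum_mul, hCcol,
      mul_div_cancel_left₀ _ (Finset.mem_filter.1 hj).2.ne']
  · obtain ⟨j, -, hj⟩ := Finset.exists_ne_zero_of_sum_ne_zero h.ne'
    have hCD : C i j * D j k ≠ 0 := fun h0 => hj (by rw [h0, zero_div])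
    exact ⟨b j, hCrel i j (pos_iff_ne_zero.2 (left_ne_zero_of_mul hCD)),
      hDrel j k (pos_iff_ne_zero.2 (right_ne_zero_of_mul hCD))⟩
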